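/- Let δ_P ∈ {−1, +1} be a choice of sign for each monic irreducible P of degree ≤ n in F_q[T] with q ≡ 1 mod 4, and let S_N(n,{δ_P}) be the set of monic irreducibles Q of degree N with Legendre symbol (P/Q) = δ_P for all deg P ≤ n. If 1 ≤ n ≤ (log_q N)², then |S_N(n,{δ_P})| = q^N/(2^{Π_q(n)} N) + O(q^{N/2 + n}), where Π_q(n) is the number of monic irreducibles of degree ≤ n. -/

import Mathlib

open Polynomial
open scoped Classical

/-- The quadratic residue symbol `(P/Q)` in `F_q[T]`: `0` if `Q ∣ P`, `1` if `P` is a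
nonzero square modulo `Q`, and `-1` otherwise. -/
noncomputable def quadSym {Fq : Type} [Field Fq] (P Q : Polynomial Fq) : ℤ :=
  if Q ∣ P then 0 else if ∃ g : Polynomial Fq, Q ∣ (g ^ 2 - P) then 1 else -1

/-!
Put `K = F_{q^N}` and let `χ` be its quadratic character. If `x ∈ K` has degree `N` and minimal
polynomial `Q`, then `(P/Q) = χ(P(x))`, and each `Q` arises from exactly `N` such `x`. Hence
`∑ x, ∏ P, (1 + δ_P χ(P(x)))` is `2^Π N |S_N|`, up to the few `x` lying in proper subfields.
Expanding the product, the empty subset contributes `q^N` and every other one a sum `∑ x, χ(F(x))`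
with `F` squarefree and nonconstant.

These sums are `O(deg F · p · √|K|)` by Stepanov's method; the factor `p` is harmless here and makes
derivatives unnecessary. Write `|K| = M R` with `M < R` powers of `p` and fix a sign `ε`. Wherever
`χ(F(x)) = ε`, the `M`-th power of `U(x, x^R) + F(x)^((R+1)/2) V(x, x^R)` is a polynomial in `x` of
degree about `M²` whose coefficients depend additively on `U` and `V`. With `deg_X < M` and
`deg_Y ≈ M/2`, the pigeonhole principle makes it vanish for some `(U, V) ≠ 0`, so that
`U(X, X^R) + F^((R+1)/2) V(X, X^R)`, which is not zero and has degree about `|K|/2`, vanishes at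
all these `x`.
-/

section BoundedDegree

lemma natCard_degreeLT (R : Type*) [Semiring R] (n : ℕ) :
    Nat.card (degreeLT R n) = Nat.card R ^ n := by
  rw [Nat.card_congr (degreeLTEquiv R n).toEquiv, Nat.card_fun, Nat.card_fin]

lemma setOf_natDegree_le_eq_degreeLT (R : Type*) [Semiring R] (n : ℕ) :
    {P : R[X] | P.natDegree ≤ n} = degreeLT R (n + 1) := by
  ext P
  rw [SetLike.mem_coe, degreeLT_succ_eq_degreeLE, mem_degreeLE, Set.mem_ofPred_eq,
    natDegree_le_iff_degree_le]

lemma finite_setOf_natDegree_le (R : Type*) [Semiring R] [Finite R] (n : ℕ) :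
    {P : R[X] | P.natDegree ≤ n}.Finite := by
  rw [setOf_natDegree_le_eq_degreeLT]
  exact Finite.of_equiv _ (degreeLTEquiv R (n + 1)).toEquiv.symm

lemma natCard_setOf_natDegree_le (R : Type*) [Semiring R] (n : ℕ) :
    Nat.card {P : R[X] | P.natDegree ≤ n} = Nat.card R ^ (n + 1) := by
  rw [setOf_natDegree_le_eq_degreeLT]
  exact natCard_degreeLT R (n + 1)

end BoundedDegree

section Bivariate

variable {R : Type*} [CommRing R] {a b m n : ℕ} {U V W : R[X][X]}

/-- The bivariate polynomials `W(X, Y)`, seen as polynomials in `Y` over `R[X]`, of degree at most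
`a` in `X` and at most `m` in `Y`. -/
def bidegreeLE (R : Type*) [CommRing R] (a m : ℕ) : AddSubgroup R[X][X] where
  carrier := {W | (∀ j, (W.coeff j).natDegree ≤ a) ∧ W.natDegree ≤ m}
  zero_mem' := by simp
  add_mem' hU hV := ⟨fun j => by
    rw [coeff_add]; exact natDegree_add_le_of_degree_le (hU.1 j) (hV.1 j),
    natDegree_add_le_of_degree_le hU.2 hV.2⟩
  neg_mem' hU := by simpa using hU

lemma bidegreeLE_mono (ha : a ≤ b) (hm : m ≤ n) : bidegreeLE R a m ≤ bidegreeLE R b n :=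
  fun _ hW => ⟨fun j => (hW.1 j).trans ha, hW.2.trans hm⟩

lemma mul_mem_bidegreeLE (hU : U ∈ bidegreeLE R a m) (hV : V ∈ bidegreeLE R b n) :
    U * V ∈ bidegreeLE R (a + b) (m + n) := by
  refine ⟨fun j => ?_, natDegree_mul_le_of_le hU.2 hV.2⟩
  rw [coeff_mul]
  exact natDegree_sum_le_of_forall_le _ _ fun i _ => natDegree_mul_le_of_le (hU.1 _) (hV.1 _)

lemma natDegree_eval_le_of_mem_bidegreeLE (hW : W ∈ bidegreeLE R a m) (g : R[X]) :
    (W.eval g).natDegree ≤ a + m * g.natDegree := by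
  rw [eval_eq_sum_range]
  refine natDegree_sum_le_of_forall_le _ _ fun j hj => natDegree_mul_le_of_le (hW.1 j) ?_
  exact natDegree_pow_le_of_le j le_rfl |>.trans <| Nat.mul_le_mul_right _ <|
    (Finset.mem_range_succ_iff.1 hj).trans hW.2

lemma eval_eval_congr {g h : R[X]} {x : R} (hgh : g.eval x = h.eval x) (W : R[X][X]) :
    (W.eval g).eval x = (W.eval h).eval x := by
  simp only [eval_eq_sum_range (p := W), eval_finsetSum, eval_mul, eval_pow, hgh]

lemma eq_zero_of_eval_eq_zero_of_degree_coeff_lt [IsDomain R] {g : R[X]}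
    (hW : ∀ j, (W.coeff j).degree < g.degree) (h : W.eval g = 0) : W = 0 := by
  by_contra hW0
  obtain ⟨V, hV, hXV⟩ := exists_eq_pow_rootMultiplicity_mul_and_not_dvd W hW0 0
  rw [C_0, sub_zero] at hV hXV
  have hg : g ≠ 0 := fun hg => by simpa [hg] using hW 0
  have hVg : V.eval g = 0 := by
    rw [hV, eval_mul, eval_pow, eval_X] at h
    exact (mul_eq_zero.1 h).resolve_left (pow_ne_zero _ hg)
  have hdvd : g ∣ V.coeff 0 := by
    have := congrArg (eval g) V.divX_mul_X_add
    rw [eval_add, eval_mul, eval_X, eval_C, hVg] at this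
    exact ⟨-V.divX.eval g, by linear_combination this⟩
  have hlt : (V.coeff 0).degree < g.degree := by
    have := hW (rootMultiplicity 0 W)
    rwa [hV, coeff_X_pow_mul', if_pos (by simp [← hV]), ← hV, Nat.sub_self] at this
  exact hXV (X_dvd_iff.2 (eq_zero_of_dvd_of_degree_lt hdvd hlt))

/-- The array of coefficients of a polynomial of bounded bidegree. -/
noncomputable def bidegreeLEEquiv (R : Type*) [CommRing R] (a m : ℕ) :
    bidegreeLE R a m ≃ (Fin (m + 1) → degreeLT R (a + 1)) where
  toFun W j := ⟨(W : R[X][X]).coeff j, by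
    rw [degreeLT_succ_eq_degreeLE, mem_degreeLE, ← natDegree_le_iff_degree_le]
    exact W.2.1 j⟩
  invFun c := ⟨∑ j : Fin (m + 1), monomial (j : ℕ) (c j : R[X]), sum_mem fun j _ => by
    have hj : (c j : R[X]).natDegree ≤ a :=
      natDegree_le_iff_degree_le.2 (mem_degreeLE.1 (degreeLT_succ_eq_degreeLE.le (c j).2))
    refine ⟨fun i => ?_, (natDegree_monomial_le _).trans (Fin.is_le j)⟩
    rw [coeff_monomial]
    split_ifs <;> simp [hj]⟩
  left_inv W := Subtype.ext <| by
    change ∑ j : Fin (m + 1), monomial (j : ℕ) ((W : R[X][X]).coeff j) = W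
    rw [Fin.sum_univ_eq_sum_range (fun j => monomial j ((W : R[X][X]).coeff j)),
      ← as_sum_range' _ _ (Nat.lt_succ_of_le W.2.2)]
  right_inv c := by
    ext j : 2
    simp [finsetSum_coeff, coeff_monomial, Fin.val_inj]

lemma natCard_bidegreeLE (R : Type*) [CommRing R] (a m : ℕ) :
    Nat.card (bidegreeLE R a m) = Nat.card R ^ ((a + 1) * (m + 1)) := by
  rw [Nat.card_congr (bidegreeLEEquiv R a m), Nat.card_fun, natCard_degreeLT, Nat.card_fin, pow_mul]

lemma exists_ne_zero_map_eq_zero_of_natCard_lt [Finite R] {A : Type*} [AddCommGroup A]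
    (L : A →+ R[X]) {D : ℕ} (hL : ∀ v, (L v).natDegree < D) (hD : Nat.card R ^ D < Nat.card A) :
    ∃ v ≠ 0, L v = 0 := by
  have hmem (v : A) : L v ∈ degreeLT R D :=
    mem_degreeLT.2 (degree_le_natDegree.trans_lt (Nat.cast_lt.2 (hL v)))
  have : Finite A := Nat.finite_of_card_ne_zero (by omega)
  have : Finite (degreeLT R D) := Finite.of_equiv _ (degreeLTEquiv R D).toEquiv.symm
  have hninj : ¬ Function.Injective fun v => (⟨L v, hmem v⟩ : degreeLT R D) := fun hinj =>
    (Nat.card_le_card_of_injective _ hinj).not_gt (by rwa [natCard_degreeLT])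
  simp only [Function.Injective, not_forall, Subtype.mk.injEq] at hninj
  obtain ⟨u, v, huv, hne⟩ := hninj
  exact ⟨u - v, sub_ne_zero.2 hne, by rw [map_sub, huv, sub_self]⟩

end Bivariate

section Stepanov

variable {K : Type*} [Field K] {F : K[X]} {U V W : K[X][X]} {p a m μ b : ℕ}
  [Fact p.Prime] [CharP K p]

lemma natDegree_pos_of_ne_C_mul_sq (hF : ∀ (c : K) (A : K[X]), F ≠ C c * A ^ 2) :
    0 < F.natDegree := by
  rw [Nat.pos_iff_ne_zero]
  intro h
  exact hF (F.coeff 0) 1 (by rw [one_pow, mul_one]; exact eq_C_of_natDegree_eq_zero h)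

lemma exists_eq_C_mul_sq_of_sq_eq {G : K[X]} (hG : G ≠ 0) (hV : V ≠ 0)
    (h : U ^ 2 = C F * (G.map C * V ^ 2)) : ∃ c A, F = C c * A ^ 2 := by
  set u := U.leadingCoeff
  set v := V.leadingCoeff
  set c := G.leadingCoeff
  have hc : C c⁻¹ * C c = (1 : K[X]) := by
    rw [← C_mul, inv_mul_cancel₀ (leadingCoeff_ne_zero.2 hG), C_1]
  have huv : u ^ 2 = v ^ 2 * (F * C c) := by
    have := congrArg leadingCoeff h
    simp only [leadingCoeff_mul, leadingCoeff_pow, leadingCoeff_C,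
      leadingCoeff_map_of_injective C_injective] at this
    linear_combination this
  obtain ⟨A, hA⟩ : v ∣ u := (IsIntegrallyClosed.pow_dvd_pow_iff two_ne_zero).1 ⟨_, huv⟩
  have hA2 : A ^ 2 = F * C c :=
    mul_left_cancel₀ (pow_ne_zero 2 (leadingCoeff_ne_zero.2 hV)) <| by
      rw [← huv, hA, mul_pow]
  exact ⟨c⁻¹, A, by linear_combination - C c⁻¹ * hA2 - F * hc⟩

/-- Stepanov's auxiliary polynomial `U(X, X^R) + F^((R+1)/2) V(X, X^R)`. -/
noncomputable def stepanovPoly (R : ℕ) (F : K[X]) (U V : K[X][X]) : K[X] :=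
  U.eval (X ^ R) + F ^ ((R + 1) / 2) * V.eval (X ^ R)

-- `F(X)^R = F^σ(X^R)` makes `F^(R+1) V(X, X^R)^2` a value of a polynomial of small degree in `X`.
lemma sq_eq_of_stepanovPoly_eq_zero (hp : p ≠ 2) (hU : U ∈ bidegreeLE K a m)
    (hV : V ∈ bidegreeLE K a m) (hdeg : 2 * a + F.natDegree < p ^ b)
    (h : stepanovPoly (p ^ b) F U V = 0) :
    U ^ 2 = C F * ((F.map (iterateFrobenius K p b)).map C * V ^ 2) := by
  set Fσ : K[X][X] := (F.map (iterateFrobenius K p b)).map C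
  have hFσ : Fσ.eval (X ^ p ^ b) = F ^ p ^ b := by
    rw [eval_map, ← map_iterateFrobenius_expand p F b, map_expand]
    rfl
  have hF : C F ∈ bidegreeLE K F.natDegree 0 :=
    ⟨fun j => by rw [coeff_C]; split_ifs <;> simp, (natDegree_C F).le⟩
  have hFσ_mem : Fσ ∈ bidegreeLE K 0 F.natDegree :=
    ⟨fun j => by simp [Fσ], natDegree_map_le.trans natDegree_map_le⟩
  have hmem : U ^ 2 - C F * (Fσ * V ^ 2) ∈
      bidegreeLE K (2 * a + F.natDegree) (2 * m + F.natDegree) := by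
    rw [pow_two, pow_two]
    exact sub_mem
      (bidegreeLE_mono (by omega) (by omega) (mul_mem_bidegreeLE hU hU))
      (bidegreeLE_mono (by omega) (by omega)
        (mul_mem_bidegreeLE hF (mul_mem_bidegreeLE hFσ_mem (mul_mem_bidegreeLE hV hV))))
  have hpow : F * F ^ p ^ b = (F ^ ((p ^ b + 1) / 2)) ^ 2 := by
    obtain ⟨s, hs⟩ : Odd (p ^ b) := ((Fact.out : p.Prime).odd_of_ne_two hp).pow
    rw [← pow_mul, ← pow_succ']
    congr 1
    omega
  refine sub_eq_zero.1 (eq_zero_of_eval_eq_zero_of_degree_coeff_lt (g := X ^ p ^ b)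
    (fun j => ?_) ?_)
  · rw [degree_X_pow]
    exact degree_le_natDegree.trans_lt (Nat.cast_lt.2 ((hmem.1 j).trans_lt hdeg))
  · simp only [eval_sub, eval_pow, eval_mul, eval_C, hFσ]
    rw [stepanovPoly, add_eq_zero_iff_eq_neg] at h
    rw [h]
    linear_combination - (V.eval (X ^ p ^ b)) ^ 2 * hpow

lemma stepanovPoly_ne_zero (hp : p ≠ 2) (hF : ∀ (c : K) (A : K[X]), F ≠ C c * A ^ 2)
    (hU : U ∈ bidegreeLE K a m) (hV : V ∈ bidegreeLE K a m)
    (hdeg : 2 * a + F.natDegree < p ^ b) (hUV : (U, V) ≠ 0) :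
    stepanovPoly (p ^ b) F U V ≠ 0 := by
  intro h
  have hsq := sq_eq_of_stepanovPoly_eq_zero hp hU hV hdeg h
  have hFσ : F.map (iterateFrobenius K p b) ≠ 0 := by
    rw [Polynomial.map_ne_zero_iff (RingHom.injective _)]
    exact fun hF0 => hF 0 0 (by simp [hF0])
  by_cases hV0 : V = 0
  · have hU0 : U = 0 := by simpa [hV0] using hsq
    exact hUV (by rw [hU0, hV0, Prod.mk_zero_zero])
  · obtain ⟨c, A, hcA⟩ := exists_eq_C_mul_sq_of_sq_eq hFσ hV0 hsq
    exact hF c A hcA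

lemma natDegree_stepanovPoly_le (hU : U ∈ bidegreeLE K a m) (hV : V ∈ bidegreeLE K a m) (R : ℕ) :
    (stepanovPoly R F U V).natDegree ≤ (R + 1) / 2 * F.natDegree + (a + m * R) := by
  have hU' := natDegree_eval_le_of_mem_bidegreeLE hU (X ^ R)
  have hV' := natDegree_eval_le_of_mem_bidegreeLE hV (X ^ R)
  rw [natDegree_X_pow] at hU' hV'
  exact natDegree_add_le_of_degree_le (hU'.trans (Nat.le_add_left _ _))
    (natDegree_mul_le_of_le natDegree_pow_le hV')

/-- The map `W(X, Y) ↦ W^σ(X^M, X)` for `M = p ^ μ`, where `σ` raises the coefficients to the power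
`M`. It has low degree and computes `W(x, y)^M` wherever `y^M = x`. -/
noncomputable def frobeniusTwist (K : Type*) [Field K] (p μ : ℕ) [Fact p.Prime] [CharP K p] :
    K[X][X] →+* K[X] :=
  eval₂RingHom (iterateFrobenius K[X] p μ) X

lemma natDegree_frobeniusTwist_le (hW : W ∈ bidegreeLE K a m) :
    (frobeniusTwist K p μ W).natDegree ≤ p ^ μ * a + m := by
  have hmem : W.map (iterateFrobenius K[X] p μ) ∈ bidegreeLE K (p ^ μ * a) m := by
    refine ⟨fun j => ?_, natDegree_map_le.trans hW.2⟩
    rw [coeff_map, iterateFrobenius_def]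
    exact natDegree_pow_le_of_le _ (hW.1 j)
  rw [frobeniusTwist, coe_eval₂RingHom, eval₂_eq_eval_map]
  simpa using natDegree_eval_le_of_mem_bidegreeLE hmem X

lemma eval_frobeniusTwist {x : K} {g : K[X]} (hx : g.eval x ^ p ^ μ = x) (W : K[X][X]) :
    (frobeniusTwist K p μ W).eval x = (W.eval g).eval x ^ p ^ μ := by
  have hg : (X : K[X]).eval x = (iterateFrobenius K[X] p μ g).eval x := by
    rw [iterateFrobenius_def, eval_X, eval_pow, hx]
  rw [frobeniusTwist, coe_eval₂RingHom, eval₂_eq_eval_map, eval_eval_congr hg, eval_map_apply,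
    iterateFrobenius_def, eval_pow]

lemma exists_stepanov_pair [Finite K] (hp : p ≠ 2) (μ : ℕ) (F : K[X]) (ε : K) :
    ∃ U ∈ bidegreeLE K (p ^ μ - 1) (p ^ μ / 2 + F.natDegree),
      ∃ V ∈ bidegreeLE K (p ^ μ - 1) (p ^ μ / 2 + F.natDegree), (U, V) ≠ 0 ∧
        frobeniusTwist K p μ U +
          C ε * F ^ ((p ^ μ + 1) / 2) * frobeniusTwist K p μ V = 0 := by
  obtain ⟨t, ht⟩ : Odd (p ^ μ) := ((Fact.out : p.Prime).odd_of_ne_two hp).pow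
  have ha : p ^ μ - 1 = 2 * t := by omega
  have hm : p ^ μ / 2 = t := by omega
  have hF : (p ^ μ + 1) / 2 = t + 1 := by omega
  rw [ha, hm, hF]
  set d := F.natDegree
  let B := bidegreeLE K (2 * t) (t + d)
  let τ : B →+ K[X] := (frobeniusTwist K p μ : K[X][X] →+ K[X]).comp B.subtype
  let L : B × B →+ K[X] := τ.coprod ((AddMonoidHom.mulLeft (C ε * F ^ (t + 1))).comp τ)
  have hLv (v : B × B) : L v = τ v.1 + C ε * F ^ (t + 1) * τ v.2 := rfl
  have hτ (W : B) : (τ W).natDegree ≤ (2 * t + 1) * (2 * t) + (t + d) := by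
    rw [← ht]
    exact natDegree_frobeniusTwist_le W.2
  have hL (v : B × B) :
      (L v).natDegree < (t + 1) * d + ((2 * t + 1) * (2 * t) + (t + d)) + 1 :=
    Nat.lt_succ_of_le <| (hLv v).symm ▸ natDegree_add_le_of_degree_le
      ((hτ v.1).trans (Nat.le_add_left _ _))
      (natDegree_mul_le_of_le ((natDegree_C_mul_le _ _).trans natDegree_pow_le) (hτ v.2))
  have hcard : Nat.card K ^ ((t + 1) * d + ((2 * t + 1) * (2 * t) + (t + d)) + 1) <
      Nat.card (B × B) := by
    rw [Nat.card_prod, natCard_bidegreeLE, ← pow_add]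
    refine Nat.pow_lt_pow_right Finite.one_lt_card ?_
    nlinarith [Nat.zero_le (t * d)]
  obtain ⟨⟨U, V⟩, hne, hzero⟩ := exists_ne_zero_map_eq_zero_of_natCard_lt L hL hcard
  refine ⟨U, U.2, V, V.2, fun h => hne ?_, hzero⟩
  obtain ⟨hU, hV⟩ := Prod.mk_eq_zero.1 h
  exact Prod.ext (Subtype.ext hU) (Subtype.ext hV)

variable [Fintype K]

lemma eval_stepanovPoly_eq_zero (hp : p ≠ 2) (hcard : Fintype.card K = p ^ μ * p ^ b) {ε x : K}
    (hUV : frobeniusTwist K p μ U +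
      C ε * F ^ ((p ^ μ + 1) / 2) * frobeniusTwist K p μ V = 0)
    (hx : F.eval x ^ (Fintype.card K / 2) = ε) :
    (stepanovPoly (p ^ b) F U V).eval x = 0 := by
  have hxg : (X ^ p ^ b : K[X]).eval x ^ p ^ μ = x := by
    rw [eval_pow, eval_X, ← pow_mul, mul_comm, ← hcard, FiniteField.pow_card]
  have hexp : (p ^ b + 1) / 2 * p ^ μ = Fintype.card K / 2 + (p ^ μ + 1) / 2 := by
    have hodd (i : ℕ) : Odd (p ^ i) := ((Fact.out : p.Prime).odd_of_ne_two hp).pow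
    obtain ⟨t, ht⟩ := hodd μ
    obtain ⟨s, hs⟩ := hodd b
    rw [hcard, ht, hs]
    have hM : (2 * t + 1 + 1) / 2 = t + 1 := by omega
    have hR : (2 * s + 1 + 1) / 2 = s + 1 := by omega
    have hMR : (2 * t + 1) * (2 * s + 1) / 2 = 2 * t * s + t + s := by
      rw [show (2 * t + 1) * (2 * s + 1) = 2 * (2 * t * s + t + s) + 1 by ring]
      omega
    rw [hM, hR, hMR]
    ring
  have hFx : (F.eval x ^ ((p ^ b + 1) / 2)) ^ p ^ μ = ε * F.eval x ^ ((p ^ μ + 1) / 2) := by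
    rw [← pow_mul, hexp, pow_add, hx]
  refine (pow_eq_zero_iff (pow_ne_zero μ (NeZero.ne p))).1 ?_
  have heval := congrArg (eval x) hUV
  simp only [eval_add, eval_mul, eval_pow, eval_C, eval_zero, eval_frobeniusTwist hxg] at heval
  rw [stepanovPoly, eval_add, eval_mul, eval_pow, add_pow_char_pow, mul_pow, hFx, heval]

lemma two_mul_card_filter_eval_pow_eq_le (hp : p ≠ 2) (hcard : Fintype.card K = p ^ μ * p ^ b)
    (hF : ∀ (c : K) (A : K[X]), F ≠ C c * A ^ 2) (hdeg : 2 * p ^ μ + F.natDegree ≤ p ^ b)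
    (ε : K) :
    2 * (Finset.univ.filter fun x : K => F.eval x ^ (Fintype.card K / 2) = ε).card
      ≤ Fintype.card K + 4 * F.natDegree * p ^ b := by
  obtain ⟨U, hU, V, hV, hUV, hzero⟩ := exists_stepanov_pair hp μ F ε
  have hodd (i : ℕ) : Odd (p ^ i) := ((Fact.out : p.Prime).odd_of_ne_two hp).pow
  obtain ⟨t, ht⟩ := hodd μ
  obtain ⟨s, hs⟩ := hodd b
  have hψ : stepanovPoly (p ^ b) F U V ≠ 0 :=
    stepanovPoly_ne_zero hp hF hU hV (by omega) hUV
  have hroots : (Finset.univ.filter fun x : K => F.eval x ^ (Fintype.card K / 2) = ε).card ≤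
      (stepanovPoly (p ^ b) F U V).natDegree := by
    refine card_le_degree_of_subset_roots fun x hx => (mem_roots hψ).2 ?_
    exact eval_stepanovPoly_eq_zero hp hcard hzero (Finset.mem_filter.1 hx).2
  have hdegψ := natDegree_stepanovPoly_le (F := F) hU hV (p ^ b)
  have hM : p ^ μ / 2 = t := by omega
  have hR : (p ^ b + 1) / 2 = s + 1 := by omega
  have hd : F.natDegree ≤ F.natDegree * p ^ b := Nat.le_mul_of_pos_right _ (by omega)
  rw [hM, hR] at hdegψ
  have hM' : p ^ μ - 1 = 2 * t := by omega
  have hs' : 2 * (s + 1) * F.natDegree = F.natDegree * p ^ b + F.natDegree := by rw [hs]; ring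
  have hMR : Fintype.card K = 2 * (t * p ^ b) + p ^ b := by rw [hcard, ht]; ring
  linarith

end Stepanov

section CharacterSum

variable {K : Type*} [Field K] [Fintype K] {F : K[X]} {p μ b : ℕ} [Fact p.Prime] [CharP K p]

lemma abs_quadraticChar_le_one (y : K) : |quadraticChar K y| ≤ 1 := by
  rcases quadraticChar_isQuadratic K y with h | h | h <;> simp [h]

lemma mul_quadraticChar_add_one {ε : ℤ} (hε : ε = 1 ∨ ε = -1) (y : K) :
    ε * quadraticChar K y + 1 =
      2 * (if quadraticChar K y = ε then 1 else 0) + (if y = 0 then 1 else 0) := by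
  by_cases hy : y = 0
  · rcases hε with rfl | rfl <;> simp [hy]
  · rcases hε with rfl | rfl <;> rcases quadraticChar_dichotomy hy with h | h <;> simp [hy, h]

lemma mul_sum_quadraticChar_eval_le (hp : p ≠ 2) (hcard : Fintype.card K = p ^ μ * p ^ b)
    (hF : ∀ (c : K) (A : K[X]), F ≠ C c * A ^ 2) (hdeg : 2 * p ^ μ + F.natDegree ≤ p ^ b)
    {ε : ℤ} (hε : ε = 1 ∨ ε = -1) :
    ε * ∑ x : K, quadraticChar K (F.eval x) ≤ 5 * F.natDegree * p ^ b := by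
  have hF0 : F ≠ 0 := ne_zero_of_natDegree_gt (natDegree_pos_of_ne_C_mul_sq hF)
  have hchar : ringChar K ≠ 2 := by rwa [ringChar.eq K p]
  set A := Finset.univ.filter fun x : K => quadraticChar K (F.eval x) = ε
  set Z := Finset.univ.filter fun x : K => F.eval x = 0
  have hsum : ε * ∑ x : K, quadraticChar K (F.eval x) + Fintype.card K =
      2 * A.card + Z.card := by
    have := Finset.sum_congr (rfl : (Finset.univ : Finset K) = _) fun x _ =>
      mul_quadraticChar_add_one hε (F.eval x)
    simp only [Finset.sum_add_distrib, ← Finset.mul_sum, Finset.sum_boole, Finset.sum_const,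
      Finset.card_univ, nsmul_eq_mul, mul_one] at this
    exact this
  have hA : 2 * A.card ≤ Fintype.card K + 4 * F.natDegree * p ^ b := by
    refine le_trans (Nat.mul_le_mul_left 2 (Finset.card_le_card fun x hx => ?_))
      (two_mul_card_filter_eval_pow_eq_le hp hcard hF hdeg ε)
    simp only [A, Finset.mem_filter, Finset.mem_univ, true_and] at hx ⊢
    rw [← quadraticChar_eq_pow_of_char_ne_two' hchar, hx]
  have hZ : Z.card ≤ F.natDegree := card_le_degree_of_subset_roots fun x hx =>
    (mem_roots hF0).2 (Finset.mem_filter.1 hx).2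
  have hd : F.natDegree ≤ F.natDegree * p ^ b :=
    Nat.le_mul_of_pos_right _ (pow_pos (NeZero.pos p) b)
  zify at hA hZ hd
  linarith

lemma abs_sum_quadraticChar_eval_le_mul_pow (hp : p ≠ 2)
    (hcard : Fintype.card K = p ^ μ * p ^ b) (hμb : p * p ^ μ ≤ p ^ b)
    (hF : ∀ (c : K) (A : K[X]), F ≠ C c * A ^ 2) :
    |∑ x : K, quadraticChar K (F.eval x)| ≤ 5 * F.natDegree * p ^ b := by
  by_cases hdeg : F.natDegree ≤ p ^ μ
  · have hp3 : 3 ≤ p := (Fact.out : p.Prime).two_le.lt_of_ne' hp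
    have hdeg' : 2 * p ^ μ + F.natDegree ≤ p ^ b := by nlinarith
    have hpos := mul_sum_quadraticChar_eval_le hp hcard hF hdeg' (Or.inl rfl)
    have hneg := mul_sum_quadraticChar_eval_le hp hcard hF hdeg' (Or.inr rfl)
    exact abs_le'.2 ⟨by linarith, by linarith⟩
  · calc |∑ x : K, quadraticChar K (F.eval x)|
        ≤ ∑ x : K, |quadraticChar K (F.eval x)| := Finset.abs_sum_le_sum_abs _ _
      _ ≤ ∑ _x : K, 1 := Finset.sum_le_sum fun x _ => abs_quadraticChar_le_one _
      _ = p ^ μ * p ^ b := by simp [hcard]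
      _ ≤ 5 * F.natDegree * p ^ b := by
        gcongr
        exact_mod_cast (by omega : p ^ μ ≤ 5 * F.natDegree)

variable (K p) in
lemma exists_card_eq_pow_mul_pow : ∃ μ b : ℕ, Fintype.card K = p ^ μ * p ^ b ∧
    p * p ^ μ ≤ p ^ b ∧ p ^ b ≤ p ^ 2 * p ^ μ := by
  obtain ⟨a, -, ha⟩ := FiniteField.card K p
  have ha0 := a.pos
  refine ⟨(a - 1) / 2, a - (a - 1) / 2, ?_, ?_, ?_⟩
  · rw [ha, ← pow_add]
    congr 1
    omega
  · rw [← pow_succ']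
    exact Nat.pow_le_pow_right (NeZero.pos p) (by omega)
  · rw [← pow_add]
    exact Nat.pow_le_pow_right (NeZero.pos p) (by omega)

theorem abs_sum_quadraticChar_eval_le (hp : p ≠ 2)
    (hF : ∀ (c : K) (A : K[X]), F ≠ C c * A ^ 2) :
    |((∑ x : K, quadraticChar K (F.eval x) : ℤ) : ℝ)| ≤
      5 * F.natDegree * p * √(Fintype.card K) := by
  obtain ⟨μ, b, hcard, hμb, hbμ⟩ := exists_card_eq_pow_mul_pow K p
  have hsqrt : (p : ℝ) ^ b ≤ p * √(Fintype.card K) := by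
    refine le_of_sq_le_sq ?_ (by positivity)
    rw [mul_pow, Real.sq_sqrt (Nat.cast_nonneg _), hcard, sq ((p : ℝ) ^ b)]
    push_cast
    rw [← mul_assoc]
    gcongr
    exact_mod_cast hbμ
  calc |((∑ x : K, quadraticChar K (F.eval x) : ℤ) : ℝ)|
      ≤ 5 * F.natDegree * (p : ℝ) ^ b := by
        exact_mod_cast abs_sum_quadraticChar_eval_le_mul_pow hp hcard hμb hF
    _ ≤ 5 * F.natDegree * (p * √(Fintype.card K)) := by gcongr
    _ = 5 * F.natDegree * p * √(Fintype.card K) := by ring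

end CharacterSum

section SignProduct

variable {ι : Type*} {S : Finset ι} {s δ : ι → ℤ}

lemma prod_one_add_mul_eq_ite (hs : ∀ i ∈ S, s i = 1 ∨ s i = -1)
    (hδ : ∀ i ∈ S, δ i = 1 ∨ δ i = -1) :
    ∏ i ∈ S, (1 + δ i * s i) = if ∀ i ∈ S, s i = δ i then 2 ^ S.card else 0 := by
  split_ifs with h
  · refine Finset.prod_eq_pow_card fun i hi => ?_
    rcases hδ i hi with hi' | hi' <;> rw [h i hi, hi'] <;> norm_num
  · push Not at h
    obtain ⟨i, hi, hne⟩ := h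
    refine Finset.prod_eq_zero hi ?_
    rcases hs i hi with hsi | hsi <;> rcases hδ i hi with hδi | hδi <;> simp_all

lemma prod_one_add_mul_mem_Icc (hs : ∀ i ∈ S, |s i| ≤ 1) (hδ : ∀ i ∈ S, δ i = 1 ∨ δ i = -1) :
    ∏ i ∈ S, (1 + δ i * s i) ∈ Set.Icc 0 (2 ^ S.card) := by
  have hfactor (i) (hi : i ∈ S) : 0 ≤ 1 + δ i * s i ∧ 1 + δ i * s i ≤ 2 := by
    have := abs_le.1 (hs i hi)
    rcases hδ i hi with h | h <;> rw [h] <;> constructor <;> linarith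
  exact ⟨Finset.prod_nonneg fun i hi => (hfactor i hi).1,
    (Finset.prod_le_prod (fun i hi => (hfactor i hi).1) fun i hi => (hfactor i hi).2).trans_eq
      (Finset.prod_const 2)⟩

end SignProduct

section SymbolWeight

variable {k K : Type*} [Field k] [Field K] [Algebra k K]

lemma ne_C_mul_sq_of_squarefree {F : K[X]} (hF : Squarefree F) (hdeg : F.natDegree ≠ 0) (c : K)
    (A : K[X]) : F ≠ C c * A ^ 2 := by
  rintro rfl
  have hA : IsUnit A := hF A ⟨C c, by ring⟩
  have hle := natDegree_C_mul_le c (A ^ 2)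
  rw [natDegree_pow, natDegree_eq_zero_of_isUnit hA, mul_zero] at hle
  exact hdeg (Nat.le_zero.1 hle)

lemma separable_prod_of_monic_irreducible [PerfectField k] {T : Finset k[X]}
    (hT : ∀ P ∈ T, P.Monic ∧ Irreducible P) : (∏ P ∈ T, P).Separable := by
  refine separable_prod' (fun P hP P' hP' hne => ?_)
    fun P hP => PerfectField.separable_of_irreducible (hT P hP).2
  refine (hT P hP).2.coprime_iff_not_dvd.2 fun hdvd => hne ?_
  exact eq_of_monic_of_associated (hT P hP).1 (hT P' hP').1
    ((hT P hP).2.associated_of_dvd (hT P' hP').2 hdvd)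

lemma prod_map_ne_C_mul_sq [PerfectField k] {T : Finset k[X]}
    (hT : ∀ P ∈ T, P.Monic ∧ Irreducible P) (hne : T.Nonempty) (c : K) (A : K[X]) :
    (∏ P ∈ T, P).map (algebraMap k K) ≠ C c * A ^ 2 := by
  refine ne_C_mul_sq_of_squarefree (separable_prod_of_monic_irreducible hT).map.squarefree ?_ c A
  rw [natDegree_map, natDegree_prod_of_monic _ _ fun P hP => (hT P hP).1]
  obtain ⟨P, hP⟩ := hne
  exact (Finset.sum_pos' (fun _ _ => Nat.zero_le _) ⟨P, hP, (hT P hP).2.natDegree_pos⟩).ne'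

variable [Fintype K] {S : Finset k[X]} {δ : k[X] → ℤ} {x : K} {p : ℕ}

/-- The weight `∏ (1 + δ_P χ(P(x)))` over `P ∈ S`, where `χ` is the quadratic character of `K`. It
is `2 ^ |S|` times the indicator of `χ(P(x)) = δ_P` for all `P ∈ S`, unless some `P(x)` vanishes. -/
noncomputable def symbolWeight (S : Finset k[X]) (δ : k[X] → ℤ) (x : K) : ℤ :=
  ∏ P ∈ S, (1 + δ P * quadraticChar K (aeval x P))

lemma symbolWeight_eq_ite (hx : ∀ P ∈ S, aeval x P ≠ 0) (hδ : ∀ P ∈ S, δ P = 1 ∨ δ P = -1) :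
    symbolWeight S δ x =
      if ∀ P ∈ S, quadraticChar K (aeval x P) = δ P then 2 ^ S.card else 0 :=
  prod_one_add_mul_eq_ite (fun P hP => quadraticChar_dichotomy (hx P hP)) hδ

lemma symbolWeight_mem_Icc (hδ : ∀ P ∈ S, δ P = 1 ∨ δ P = -1) (x : K) :
    symbolWeight S δ x ∈ Set.Icc 0 (2 ^ S.card) :=
  prod_one_add_mul_mem_Icc (fun _ _ => abs_quadraticChar_le_one _) hδ

lemma sum_symbolWeight (S : Finset k[X]) (δ : k[X] → ℤ) :
    ∑ x : K, symbolWeight S δ x = Fintype.card K + ∑ T ∈ S.powerset.erase ∅,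
      (∏ P ∈ T, δ P) *
        ∑ x : K, quadraticChar K (((∏ P ∈ T, P).map (algebraMap k K)).eval x) := by
  simp_rw [symbolWeight, Finset.prod_one_add]
  rw [Finset.sum_comm, ← Finset.add_sum_erase _ _ (Finset.empty_mem_powerset S)]
  congr 1
  · simp
  · refine Finset.sum_congr rfl fun T _ => ?_
    simp only [Finset.mul_sum, Finset.prod_mul_distrib, eval_map_algebraMap, map_prod]

lemma abs_mul_sum_quadraticChar_prod_le [PerfectField k] [Fact p.Prime] [CharP K p] (hp : p ≠ 2)
    {T : Finset k[X]} (hT : ∀ P ∈ T, P.Monic ∧ Irreducible P) (hne : T.Nonempty)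
    (hδ : ∀ P ∈ T, δ P = 1 ∨ δ P = -1) :
    |(((∏ P ∈ T, δ P) *
        ∑ x : K, quadraticChar K (((∏ P ∈ T, P).map (algebraMap k K)).eval x) : ℤ) : ℝ)| ≤
      5 * (∑ P ∈ T, P.natDegree : ℕ) * p * √(Fintype.card K) := by
  have hsign : |∏ P ∈ T, δ P| = 1 := by
    rw [Finset.abs_prod]
    exact Finset.prod_eq_one fun P hP => by rcases hδ P hP with h | h <;> simp [h]
  rw [← Int.cast_abs, abs_mul, hsign, one_mul, Int.cast_abs]
  refine (abs_sum_quadraticChar_eval_le hp (prod_map_ne_C_mul_sq hT hne)).trans_eq ?_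
  rw [natDegree_map, natDegree_prod_of_monic _ _ fun P hP => (hT P hP).1]

theorem abs_sum_symbolWeight_sub_card_le [PerfectField k] [Fact p.Prime] [CharP K p] (hp : p ≠ 2)
    (hS : ∀ P ∈ S, P.Monic ∧ Irreducible P) (hδ : ∀ P ∈ S, δ P = 1 ∨ δ P = -1) :
    |((∑ x : K, symbolWeight S δ x : ℤ) : ℝ) - Fintype.card K| ≤
      2 ^ S.card * (5 * (∑ P ∈ S, P.natDegree : ℕ) * p * √(Fintype.card K)) := by
  set B : ℝ := 5 * (∑ P ∈ S, P.natDegree : ℕ) * p * √(Fintype.card K)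
  rw [sum_symbolWeight, Int.cast_add, Int.cast_natCast, add_sub_cancel_left, Int.cast_sum]
  calc _ ≤ ∑ T ∈ S.powerset.erase ∅, _ := Finset.abs_sum_le_sum_abs _ _
    _ ≤ ∑ _T ∈ S.powerset.erase ∅, B := Finset.sum_le_sum fun T hT => by
      obtain ⟨hne, hTS⟩ := Finset.mem_erase.1 hT
      rw [Finset.mem_powerset] at hTS
      refine (abs_mul_sum_quadraticChar_prod_le hp (fun P hP => hS P (hTS hP))
        (Finset.nonempty_iff_ne_empty.2 hne) fun P hP => hδ P (hTS hP)).trans ?_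
      have : ∑ P ∈ T, P.natDegree ≤ ∑ P ∈ S, P.natDegree := Finset.sum_le_sum_of_subset hTS
      simp only [B]
      gcongr
    _ = (S.powerset.erase ∅).card * B := by rw [Finset.sum_const, nsmul_eq_mul]
    _ ≤ 2 ^ S.card * B := by
      gcongr
      exact_mod_cast (Finset.card_le_card (Finset.erase_subset _ _)).trans_eq
        (Finset.card_powerset S)

end SymbolWeight

section MinimalPolynomial

variable {k K : Type*} [Field k] [Field K] [Algebra k K]

lemma natDegree_minpoly_le_half [FiniteDimensional k K] {x : K}
    (hx : (minpoly k x).natDegree ≠ Module.finrank k K) :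
    (minpoly k x).natDegree ≤ Module.finrank k K / 2 := by
  obtain ⟨e, he⟩ := minpoly.degree_dvd (IsIntegral.of_finite k x)
  have hpos : 0 < Module.finrank k K := Module.finrank_pos
  rw [Nat.le_div_iff_mul_le two_pos, he]
  refine Nat.mul_le_mul_left _ ((Nat.two_le_iff e).2 ⟨?_, ?_⟩)
  · rintro rfl
    omega
  · rintro rfl
    omega

lemma aeval_surjective_of_natDegree_minpoly_eq [FiniteDimensional k K] {x : K}
    (hx : (minpoly k x).natDegree = Module.finrank k K) :
    Function.Surjective (aeval x : k[X] → K) := by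
  have htop := (Field.primitive_element_iff_minpoly_natDegree_eq k x).2 hx
  have hadj := IntermediateField.adjoin_simple_toSubalgebra_of_isAlgebraic
    (IsAlgebraic.of_finite k x)
  rw [htop, Algebra.adjoin_singleton_eq_range_aeval] at hadj
  exact AlgHom.range_eq_top (aeval x : k[X] →ₐ[k] K) |>.1 hadj.symm

lemma exists_minpoly_dvd_sq_sub_iff_isSquare [FiniteDimensional k K] {x : K}
    (hx : (minpoly k x).natDegree = Module.finrank k K) (P : k[X]) :
    (∃ g : k[X], minpoly k x ∣ g ^ 2 - P) ↔ IsSquare (aeval x P) := by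
  simp only [minpoly.dvd_iff, map_sub, map_pow, sub_eq_zero, isSquare_iff_exists_sq]
  refine ⟨fun ⟨g, hg⟩ => ⟨aeval x g, hg.symm⟩, fun ⟨y, hy⟩ => ?_⟩
  obtain ⟨g, rfl⟩ := aeval_surjective_of_natDegree_minpoly_eq hx y
  exact ⟨g, hy.symm⟩

lemma pow_natCard_pow_natDegree_minpoly [Finite k] {x : K} (hx : IsIntegral k x) :
    x ^ Nat.card k ^ (minpoly k x).natDegree = x := by
  have hdvd := (minpoly.irreducible hx).natDegree_dvd_iff_dvd_X_pow_card_pow_sub_X.1 dvd_rfl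
  have hzero := aeval_eq_zero_of_dvd_aeval_eq_zero hdvd (minpoly.aeval k x)
  rwa [map_sub, map_pow, aeval_X, sub_eq_zero] at hzero

lemma card_filter_pow_eq_self_le [Fintype K] {m : ℕ} (hm : 1 < m) :
    (Finset.univ.filter fun x : K => x ^ m = x).card ≤ m := by
  have hroots : (Finset.univ.filter fun x : K => x ^ m = x).card ≤
      (X ^ m - X : K[X]).natDegree :=
    card_le_degree_of_subset_roots fun x hx =>
      (mem_roots (FiniteField.X_pow_card_sub_X_ne_zero K hm)).2 <| by
        simpa [sub_eq_zero] using hx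
  rwa [FiniteField.X_pow_card_sub_X_natDegree_eq K hm] at hroots

lemma card_filter_natDegree_minpoly_ne_le [Finite k] [Fintype K] :
    (Finset.univ.filter fun x : K => (minpoly k x).natDegree ≠ Module.finrank k K).card
      ≤ Module.finrank k K * Nat.card k ^ (Module.finrank k K / 2) := by
  set N := Module.finrank k K
  have hsub : (Finset.univ.filter fun x : K => (minpoly k x).natDegree ≠ N) ⊆
      (Finset.Icc 1 (N / 2)).biUnion fun d =>
        Finset.univ.filter fun x : K => x ^ Nat.card k ^ d = x := by
    intro x hx
    have hint : IsIntegral k x := IsIntegral.of_finite k x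
    simp only [Finset.mem_biUnion, Finset.mem_Icc, Finset.mem_filter, Finset.mem_univ, true_and]
    exact ⟨_, ⟨minpoly.natDegree_pos hint, natDegree_minpoly_le_half (Finset.mem_filter.1 hx).2⟩,
      pow_natCard_pow_natDegree_minpoly hint⟩
  have hpow (d) (hd : d ∈ Finset.Icc 1 (N / 2)) :
      (Finset.univ.filter fun x : K => x ^ Nat.card k ^ d = x).card ≤ Nat.card k ^ (N / 2) := by
    obtain ⟨hd1, hdN⟩ := Finset.mem_Icc.1 hd
    have hq : 1 < Nat.card k := Finite.one_lt_card
    exact (card_filter_pow_eq_self_le (Nat.one_lt_pow (by omega) hq)).trans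
      (Nat.pow_le_pow_right (by omega) hdN)
  calc _ ≤ _ := Finset.card_le_card hsub
    _ ≤ _ := Finset.card_biUnion_le_card_mul _ _ _ hpow
    _ ≤ N * Nat.card k ^ (N / 2) := by
      rw [Nat.card_Icc]
      exact Nat.mul_le_mul_right _ (by omega)

lemma card_filter_minpoly_eq [Finite k] [Fintype K] {Q : k[X]} (hmonic : Q.Monic)
    (hirr : Irreducible Q) (hdeg : Q.natDegree ∣ Module.finrank k K) :
    (Finset.univ.filter fun x : K => minpoly k x = Q).card = Q.natDegree := by
  have hdvd : Q ∣ X ^ Nat.card K - X := by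
    rw [Module.natCard_eq_pow_finrank (K := k) (V := K)]
    exact hirr.natDegree_dvd_iff_dvd_X_pow_card_pow_sub_X.1 hdeg
  have hsplits : Splits (Q.map (algebraMap k K)) :=
    (splits_X_pow_nat_card_sub_X (K := K)).of_dvd
      (FiniteField.X_pow_card_sub_X_ne_zero K Finite.one_lt_card)
      (by simpa using map_dvd (algebraMap k K) hdvd)
  rw [← card_rootSet_eq_natDegree (PerfectField.separable_of_irreducible hirr) hsplits,
    ← Set.toFinset_card]
  congr 1
  ext x
  simp only [Finset.mem_filter, Finset.mem_univ, true_and, Set.mem_toFinset,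
    mem_rootSet_of_ne hirr.ne_zero]
  exact ⟨fun h => h ▸ minpoly.aeval k x,
    fun h => (minpoly.eq_of_irreducible_of_monic hirr h hmonic).symm⟩

lemma card_filter_minpoly_mem [Finite k] [Fintype K] {s : Set k[X]}
    (hs : ∀ Q ∈ s, Q.Monic ∧ Irreducible Q ∧ Q.natDegree = Module.finrank k K) (hfin : s.Finite) :
    (Finset.univ.filter fun x : K => minpoly k x ∈ s).card =
      Nat.card s * Module.finrank k K := by
  rw [Finset.card_eq_sum_card_fiberwise (f := fun x : K => minpoly k x) (t := hfin.toFinset)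
    (fun x hx => by simpa using hx), Finset.sum_const_nat (m := Module.finrank k K),
    Nat.card_eq_card_finite_toFinset hfin]
  intro Q hQ
  rw [hfin.mem_toFinset] at hQ
  obtain ⟨hmonic, hirr, hdeg⟩ := hs Q hQ
  rw [Finset.filter_filter, ← hdeg, ← card_filter_minpoly_eq hmonic hirr hdeg.dvd]
  exact congrArg Finset.card (Finset.filter_congr fun x _ => and_iff_right_of_imp fun h => h ▸ hQ)

end MinimalPolynomial

section PrescribedSymbols

variable {k : Type} [Field k] {N : ℕ} {S : Finset k[X]} {δ : k[X] → ℤ}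

/-- The monic irreducible `Q` of degree `N` with `(P/Q) = δ_P` for all `P ∈ S`. -/
def irreduciblesWithSymbols (N : ℕ) (S : Finset k[X]) (δ : k[X] → ℤ) : Set k[X] :=
  {Q | Q.Monic ∧ Irreducible Q ∧ Q.natDegree = N ∧ ∀ P ∈ S, quadSym P Q = δ P}

lemma finite_irreduciblesWithSymbols [Finite k] : (irreduciblesWithSymbols N S δ).Finite :=
  (finite_setOf_natDegree_le k N).subset fun _ hQ => hQ.2.2.1.le

section Extension

variable {K : Type*} [Field K] [Fintype K] [Algebra k K]

lemma quadSym_minpoly [FiniteDimensional k K] {x : K}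
    (hx : (minpoly k x).natDegree = Module.finrank k K) (P : k[X]) :
    quadSym P (minpoly k x) = quadraticChar K (aeval x P) := by
  rw [quadSym, exists_minpoly_dvd_sq_sub_iff_isSquare hx, minpoly.dvd_iff, quadraticChar_apply,
    quadraticCharFun]
  congr

lemma minpoly_mem_irreduciblesWithSymbols_iff [FiniteDimensional k K] {x : K}
    (hx : (minpoly k x).natDegree = Module.finrank k K) :
    minpoly k x ∈ irreduciblesWithSymbols (Module.finrank k K) S δ ↔
      ∀ P ∈ S, quadraticChar K (aeval x P) = δ P := by
  have hint : IsIntegral k x := IsIntegral.of_finite k x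
  simp only [irreduciblesWithSymbols, Set.mem_ofPred_eq, minpoly.monic hint,
    minpoly.irreducible hint, hx, quadSym_minpoly hx, true_and]

lemma sum_symbolWeight_of_natDegree_eq [Finite k]
    (hS : ∀ P ∈ S, P.Monic ∧ Irreducible P ∧ P.natDegree ≠ Module.finrank k K)
    (hδ : ∀ P ∈ S, δ P = 1 ∨ δ P = -1) :
    ∑ x : K with (minpoly k x).natDegree = Module.finrank k K, symbolWeight S δ x =
      2 ^ S.card * (Nat.card (irreduciblesWithSymbols (Module.finrank k K) S δ) *
        Module.finrank k K) := by
  set 𝒬 := irreduciblesWithSymbols (Module.finrank k K) S δ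
  have hweight (x : K) (hx : (minpoly k x).natDegree = Module.finrank k K) :
      symbolWeight S δ x = if minpoly k x ∈ 𝒬 then 2 ^ S.card else 0 := by
    simp only [𝒬, minpoly_mem_irreduciblesWithSymbols_iff hx]
    refine symbolWeight_eq_ite (fun P hP hzero => ?_) hδ
    obtain ⟨hmonic, hirr, hdeg⟩ := hS P hP
    exact hdeg (by rw [minpoly.eq_of_irreducible_of_monic hirr hzero hmonic, hx])
  rw [Finset.sum_congr rfl fun x hx => hweight x (Finset.mem_filter.1 hx).2, ← Finset.sum_filter,
    Finset.filter_filter, Finset.sum_const, nsmul_eq_mul, mul_comm, ← Nat.cast_mul,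
    ← card_filter_minpoly_mem (fun Q hQ => ⟨hQ.1, hQ.2.1, hQ.2.2.1⟩)
      finite_irreduciblesWithSymbols]
  congr 3
  exact Finset.filter_congr fun x _ => and_iff_right_of_imp fun hx => hx.2.2.1

lemma sum_symbolWeight_of_natDegree_ne_mem_Icc [Finite k]
    (hδ : ∀ P ∈ S, δ P = 1 ∨ δ P = -1) :
    ((∑ x : K with (minpoly k x).natDegree ≠ Module.finrank k K, symbolWeight S δ x : ℤ) : ℝ) ∈
      Set.Icc 0 (2 ^ S.card * (Module.finrank k K * √(Fintype.card K))) := by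
  set E := Finset.univ.filter fun x : K => (minpoly k x).natDegree ≠ Module.finrank k K
  have hE : (E.card : ℝ) ≤ Module.finrank k K * √(Fintype.card K) := by
    refine (Nat.cast_le.2 card_filter_natDegree_minpoly_ne_le).trans ?_
    push_cast
    gcongr
    refine Real.le_sqrt_of_sq_le ?_
    rw [← Nat.card_eq_fintype_card, Module.natCard_eq_pow_finrank (K := k) (V := K), ← pow_mul]
    exact_mod_cast Nat.pow_le_pow_right Nat.card_pos (Nat.div_mul_le_self _ 2)
  constructor
  · exact_mod_cast Finset.sum_nonneg fun (x : K) _ => (symbolWeight_mem_Icc hδ x).1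
  · calc ((∑ x ∈ E, symbolWeight S δ x : ℤ) : ℝ)
        ≤ 2 ^ S.card * E.card := by
          have := Finset.sum_le_card_nsmul E _ _ fun (x : K) _ => (symbolWeight_mem_Icc hδ x).2
          rw [nsmul_eq_mul, mul_comm] at this
          exact_mod_cast this
      _ ≤ _ := by gcongr

theorem abs_two_pow_mul_natCard_irreduciblesWithSymbols_sub_le [Finite k] {p : ℕ} [Fact p.Prime]
    [CharP K p] (hp : p ≠ 2)
    (hS : ∀ P ∈ S, P.Monic ∧ Irreducible P ∧ P.natDegree ≠ Module.finrank k K)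
    (hδ : ∀ P ∈ S, δ P = 1 ∨ δ P = -1) :
    |(2 : ℝ) ^ S.card * (Nat.card (irreduciblesWithSymbols (Module.finrank k K) S δ) *
        Module.finrank k K) - Fintype.card K| ≤
      2 ^ S.card * ((5 * (∑ P ∈ S, P.natDegree : ℕ) * p + Module.finrank k K) *
        √(Fintype.card K)) := by
  have hsum := abs_sum_symbolWeight_sub_card_le (K := K) hp
    (fun P hP => ⟨(hS P hP).1, (hS P hP).2.1⟩) hδ
  obtain ⟨hnonneg, hle⟩ := sum_symbolWeight_of_natDegree_ne_mem_Icc (K := K) hδ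
  rw [← Finset.sum_filter_add_sum_filter_not _
      fun x : K => (minpoly k x).natDegree = Module.finrank k K,
    sum_symbolWeight_of_natDegree_eq hS hδ, Int.cast_add, abs_le] at hsum
  push_cast [ne_eq] at hsum hnonneg hle
  rw [abs_le]
  push_cast
  constructor <;> linarith

end Extension

theorem abs_natCard_irreduciblesWithSymbols_sub_le [Finite k] {p : ℕ} [Fact p.Prime] [CharP k p]
    (hp : p ≠ 2) (hN : N ≠ 0) (hS : ∀ P ∈ S, P.Monic ∧ Irreducible P ∧ P.natDegree ≠ N)
    (hδ : ∀ P ∈ S, δ P = 1 ∨ δ P = -1) :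
    |(Nat.card (irreduciblesWithSymbols N S δ) : ℝ) - (Nat.card k : ℝ) ^ N / (2 ^ S.card * N)| ≤
      (5 * (∑ P ∈ S, P.natDegree : ℕ) * p / N + 1) * √((Nat.card k : ℝ) ^ N) := by
  have : NeZero N := ⟨hN⟩
  let K := FiniteField.Extension k p N
  have : Fintype K := Fintype.ofFinite K
  have : CharP K p := charP_of_injective_algebraMap (algebraMap k K).injective p
  have hrank : Module.finrank k K = N := FiniteField.finrank_extension k p N
  have hcard : (Fintype.card K : ℝ) = (Nat.card k : ℝ) ^ N := by
    rw [← Nat.card_eq_fintype_card, FiniteField.natCard_extension k p N, Nat.cast_pow]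
  have hbound := abs_two_pow_mul_natCard_irreduciblesWithSymbols_sub_le (K := K) hp
    (by rwa [hrank]) hδ
  rw [hrank, hcard] at hbound
  have hpos : (0 : ℝ) < 2 ^ S.card * N := by positivity
  refine le_of_mul_le_mul_left ?_ hpos
  calc _ = |(2 : ℝ) ^ S.card * (Nat.card (irreduciblesWithSymbols N S δ) * N) -
        (Nat.card k : ℝ) ^ N| := by
        nth_rw 1 [← abs_of_pos hpos]
        rw [← abs_mul, mul_sub, mul_div_cancel₀ _ hpos.ne']
        ring_nf
    _ ≤ _ := hbound
    _ = _ := by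
      field_simp

section AllSmallSymbols

variable [Finite k] {n : ℕ}

/-- The monic irreducible polynomials over `k` of degree at most `n`. -/
noncomputable def monicIrreduciblesLE (k : Type*) [Field k] [Finite k] (n : ℕ) : Finset k[X] :=
  (finite_setOf_natDegree_le k n).toFinset.filter fun P => P.Monic ∧ Irreducible P

lemma mem_monicIrreduciblesLE {k : Type*} [Field k] [Finite k] {P : k[X]} :
    P ∈ monicIrreduciblesLE k n ↔ P.Monic ∧ Irreducible P ∧ P.natDegree ≤ n := by
  rw [monicIrreduciblesLE, Finset.mem_filter, Set.Finite.mem_toFinset, Set.mem_ofPred_eq,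
    and_comm, and_assoc]

lemma sum_natDegree_monicIrreduciblesLE_le (k : Type*) [Field k] [Finite k] (n : ℕ) :
    ∑ P ∈ monicIrreduciblesLE k n, P.natDegree ≤ Nat.card k ^ (n + 1) * n := by
  refine (Finset.sum_le_card_nsmul _ _ n fun P hP => (mem_monicIrreduciblesLE.1 hP).2.2).trans ?_
  rw [smul_eq_mul, ← natCard_setOf_natDegree_le k n,
    Nat.card_eq_card_finite_toFinset (finite_setOf_natDegree_le k n)]
  exact Nat.mul_le_mul_right n (Finset.card_filter_le _ _)

lemma charP_dvd_natCard (R : Type*) [AddGroupWithOne R] [Finite R] (p : ℕ) [CharP R p] :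
    p ∣ Nat.card R := by
  have := Fintype.ofFinite R
  rw [← CharP.cast_eq_zero_iff R p, Nat.card_eq_fintype_card, Nat.cast_card_eq_zero]

lemma irreduciblesWithSymbols_eq_empty_of_le (hNn : N ≤ n)
    (hδ : ∀ P ∈ monicIrreduciblesLE k n, δ P ≠ 0) :
    irreduciblesWithSymbols N (monicIrreduciblesLE k n) δ = ∅ := by
  refine Set.eq_empty_of_forall_notMem fun Q ⟨hmonic, hirr, hdeg, hsym⟩ => ?_
  have hQ := mem_monicIrreduciblesLE.2 ⟨hmonic, hirr, hdeg.trans_le hNn⟩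
  exact hδ Q hQ ((hsym Q hQ).symm.trans (if_pos dvd_rfl))

lemma abs_natCard_irreduciblesWithSymbols_sub_le_of_le (hN : N ≠ 0) (hNn : N ≤ n)
    (hδ : ∀ P ∈ monicIrreduciblesLE k n, δ P ≠ 0) :
    |(Nat.card (irreduciblesWithSymbols N (monicIrreduciblesLE k n) δ) : ℝ) -
        (Nat.card k : ℝ) ^ N / (2 ^ (monicIrreduciblesLE k n).card * N)| ≤
      (Nat.card k : ℝ) ^ n := by
  have hq : (1 : ℝ) ≤ Nat.card k := Nat.one_le_cast.2 Nat.card_pos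
  have hN' : (1 : ℝ) ≤ N := Nat.one_le_cast.2 (Nat.one_le_iff_ne_zero.2 hN)
  rw [irreduciblesWithSymbols_eq_empty_of_le hNn hδ, Nat.card_of_isEmpty, Nat.cast_zero, zero_sub,
    abs_neg, abs_of_nonneg (by positivity)]
  exact (div_le_self (by positivity) (one_le_mul_of_one_le_of_one_le
    (one_le_pow₀ one_le_two) hN')).trans (pow_le_pow_right₀ hq hNn)

lemma abs_natCard_irreduciblesWithSymbols_sub_le_of_lt (hodd : Odd (Nat.card k)) (hnN : n < N)
    (hδ : ∀ P ∈ monicIrreduciblesLE k n, δ P = 1 ∨ δ P = -1) :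
    |(Nat.card (irreduciblesWithSymbols N (monicIrreduciblesLE k n) δ) : ℝ) -
        (Nat.card k : ℝ) ^ N / (2 ^ (monicIrreduciblesLE k n).card * N)| ≤
      (5 * (Nat.card k : ℝ) ^ (n + 2) + 1) * √((Nat.card k : ℝ) ^ N) := by
  obtain ⟨p, _⟩ := CharP.exists k
  have : Fact p.Prime := ⟨CharP.char_is_prime k p⟩
  have hpq : p ∣ Nat.card k := charP_dvd_natCard k p
  have hp : p ≠ 2 := by
    rintro rfl
    exact hodd.not_two_dvd_nat hpq
  have hN : (0 : ℝ) < N := Nat.cast_pos.2 (Nat.zero_lt_of_lt hnN)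
  have hS (P) (hP : P ∈ monicIrreduciblesLE k n) :
      P.Monic ∧ Irreducible P ∧ P.natDegree ≠ N := by
    obtain ⟨hmonic, hirr, hdeg⟩ := mem_monicIrreduciblesLE.1 hP
    exact ⟨hmonic, hirr, (hdeg.trans_lt hnN).ne⟩
  refine (abs_natCard_irreduciblesWithSymbols_sub_le hp (Nat.ne_zero_of_lt hnN) hS hδ).trans ?_
  gcongr
  rw [div_le_iff₀ hN, mul_assoc, mul_assoc]
  refine mul_le_mul_of_nonneg_left ?_ (by norm_num)
  norm_cast
  calc (∑ P ∈ monicIrreduciblesLE k n, P.natDegree) * p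
      ≤ Nat.card k ^ (n + 1) * N * Nat.card k := Nat.mul_le_mul
        ((sum_natDegree_monicIrreduciblesLE_le k n).trans (Nat.mul_le_mul_left _ hnN.le))
        (Nat.le_of_dvd Nat.card_pos hpq)
    _ = Nat.card k ^ (n + 2) * N := by ring

theorem abs_natCard_irreduciblesWithSymbols_monicIrreduciblesLE_sub_le (hodd : Odd (Nat.card k))
    (hN : N ≠ 0) (hδ : ∀ P ∈ monicIrreduciblesLE k n, δ P = 1 ∨ δ P = -1) :
    |(Nat.card (irreduciblesWithSymbols N (monicIrreduciblesLE k n) δ) : ℝ) -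
        (Nat.card k : ℝ) ^ N / (2 ^ (monicIrreduciblesLE k n).card * N)| ≤
      6 * (Nat.card k : ℝ) ^ 2 * (Nat.card k : ℝ) ^ ((N : ℝ) / 2 + n) := by
  have hq : (1 : ℝ) ≤ Nat.card k := Nat.one_le_cast.2 Nat.card_pos
  have hrpow : (Nat.card k : ℝ) ^ ((N : ℝ) / 2 + n) =
      √((Nat.card k : ℝ) ^ N) * (Nat.card k : ℝ) ^ n := by
    rw [Real.rpow_add (by positivity), Real.rpow_natCast, Real.sqrt_eq_rpow,
      ← Real.rpow_natCast_mul (by positivity), mul_one_div]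
  have hsqrt : 1 ≤ √((Nat.card k : ℝ) ^ N) := Real.one_le_sqrt.2 (one_le_pow₀ hq)
  rw [hrpow]
  rcases le_or_gt N n with hNn | hnN
  · have hδ0 (P) (hP : P ∈ monicIrreduciblesLE k n) : δ P ≠ 0 := by
      rcases hδ P hP with h | h <;> simp [h]
    refine (abs_natCard_irreduciblesWithSymbols_sub_le_of_le hN hNn hδ0).trans ?_
    rw [← mul_assoc]
    refine le_mul_of_one_le_left (by positivity) ?_
    nlinarith [one_le_pow₀ hq (n := 2)]
  · refine (abs_natCard_irreduciblesWithSymbols_sub_le_of_lt hodd hnN hδ).trans ?_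
    have hpow : (1 : ℝ) ≤ (Nat.card k : ℝ) ^ (n + 2) := one_le_pow₀ hq
    calc _ ≤ (5 * (Nat.card k : ℝ) ^ (n + 2) + (Nat.card k : ℝ) ^ (n + 2)) *
          √((Nat.card k : ℝ) ^ N) := by gcongr
      _ = _ := by ring

end AllSmallSymbols

end PrescribedSymbols

theorem card_prescribed_symbols_general (Fq : Type) [Field Fq] [Fintype Fq]
    (q : ℕ) (hq : Fintype.card Fq = q) (hodd : Odd q) (N n : ℕ) (δ : Fq[X] → ℤ) (hN : 0 < N)
    (hδ : ∀ P : Fq[X], P.Monic → Irreducible P → P.natDegree ≤ n → δ P = 1 ∨ δ P = -1) :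
    |(Nat.card {Q : Fq[X] // Q.Monic ∧ Irreducible Q ∧ Q.natDegree = N ∧
          ∀ P : Fq[X], P.Monic → Irreducible P → P.natDegree ≤ n → quadSym P Q = δ P} : ℝ)
        - (q : ℝ) ^ N
            / (2 ^ (Nat.card {P : Fq[X] // P.Monic ∧ Irreducible P ∧ P.natDegree ≤ n}) * N)|
      ≤ 6 * (q : ℝ) ^ 2 * (q : ℝ) ^ ((N : ℝ) / 2 + n) := by
  rw [← Nat.card_eq_fintype_card] at hq
  subst hq
  rw [Nat.subtype_card (monicIrreduciblesLE Fq n) fun P => mem_monicIrreduciblesLE]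
  convert abs_natCard_irreduciblesWithSymbols_monicIrreduciblesLE_sub_le (δ := δ) hodd hN.ne' ?_
    using 5
  · simp only [irreduciblesWithSymbols, mem_monicIrreduciblesLE, and_imp]
    rfl
  · simpa only [mem_monicIrreduciblesLE, and_imp] using hδ

/-- Counting irreducibles with prescribed quadratic residue symbols:
`|S_N(n,{δ_P})| = q^N/(2^{Π_q(n)} N) + O(q^{N/2+n})` for `1 ≤ n ≤ (log_q N)²`. -/
theorem card_prescribed_symbols (Fq : Type) [Field Fq] [Fintype Fq]
    (q : ℕ) (hq : Fintype.card Fq = q) (hq4 : q % 4 = 1) :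
    ∃ C : ℝ, 0 < C ∧ ∀ (N n : ℕ) (δ : Polynomial Fq → ℤ),
      0 < N → 1 ≤ n → (n : ℝ) ≤ (Real.logb q N) ^ 2 →
      (∀ P : Polynomial Fq, P.Monic → Irreducible P → P.natDegree ≤ n →
        δ P = 1 ∨ δ P = -1) →
      |(Nat.card {Q : Polynomial Fq // Q.Monic ∧ Irreducible Q ∧ Q.natDegree = N ∧
            ∀ P : Polynomial Fq, P.Monic → Irreducible P → P.natDegree ≤ n →
              quadSym P Q = δ P} : ℝ)
          - (q : ℝ) ^ N
              / (2 ^ (Nat.card {P : Polynomial Fq //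
                    P.Monic ∧ Irreducible P ∧ P.natDegree ≤ n}) * N)|
        ≤ C * (q : ℝ) ^ ((N : ℝ) / 2 + n) :=
  ⟨6 * (q : ℝ) ^ 2, by subst hq; positivity, fun N n δ hN _ _ hδ =>
    card_prescribed_symbols_general Fq q hq (Nat.odd_iff.2 (by omega)) N n δ hN hδ⟩
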